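/- Let N be a positive integer, h = (h₁,h₂) ∈ ℤ², τ ∈ H, and t > 0. For 0 < ε < min(1/(1+t²), t²/(1+t²)), the series Θ̃_h(τ,t;ε) := Σ_{x₁ ≡ h₁ (mod N), x₂ ≡ h₂ (mod N)} φ̃_τ( ι_t(x₁+ε, x₂+ε) )·e( ε·(x₁+x₂+2ε)/N ) converges absolutely, as does the series Θ̃_h(τ,t;0) := Σ_{x₁ ≡ h₁ (mod N), x₂ ≡ h₂ (mod N)} φ̃_τ( ι_t(x₁,x₂) ), and lim_{ε→0⁺} [ Θ̃_h(τ,t;ε) − c_{−1}(h)/(2πi·(τ−1)·ε) ] = c_h(0) + Θ̃_h(τ,t;0). -/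

import Mathlib

open MeasureTheory Filter Set

noncomputable section

/-- `e(z) = exp(2πiz)` -/
def eC (z : ℂ) : ℂ := Complex.exp (2 * Real.pi * Complex.I * z)

/-- The complementary error function `erfc(x) = (2/√π)∫_x^∞ e^{-r²} dr`. -/
def erfc (x : ℝ) : ℝ := (2 / Real.sqrt Real.pi) * ∫ r in Set.Ioi x, Real.exp (-(r ^ 2))

/-- `φ*_τ(x,y) = e(((y²-x²)/2)τ)·sgn(x)·erfc(√(2πv)|x|)`. -/
def phiStar (τ : ℂ) (x y : ℝ) : ℂ :=
  eC ((((y : ℂ) ^ 2 - (x : ℂ) ^ 2) / 2) * τ) * (Real.sign x : ℂ) *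
    (erfc (Real.sqrt (2 * Real.pi * τ.im) * |x|) : ℂ)

/-- `φ⁺_τ(x,y) = e(((y²-x²)/2)τ)·sgn(x)·1_{y²>x²}`. -/
def phiPlus (τ : ℂ) (x y : ℝ) : ℂ :=
  eC ((((y : ℂ) ^ 2 - (x : ℂ) ^ 2) / 2) * τ) * (Real.sign x : ℂ) *
    (if x ^ 2 < y ^ 2 then 1 else 0)

/-- `φ̃_τ = φ⁺_τ - φ*_τ`. -/
def phiTilde (τ : ℂ) (x y : ℝ) : ℂ := phiPlus τ x y - phiStar τ x y

/-- The isometry `ι_t(x₁,x₂) = ((t⁻¹x₁+tx₂)/√(2N), (t⁻¹x₁-tx₂)/√(2N))`. -/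
def iota (N : ℕ) (t x₁ x₂ : ℝ) : ℝ × ℝ :=
  ((t⁻¹ * x₁ + t * x₂) / Real.sqrt (2 * N), (t⁻¹ * x₁ - t * x₂) / Real.sqrt (2 * N))

/-- `⟨x⟩ ∈ (0,1]`, the representative of `x` modulo `ℤ` lying in `(0,1]`. -/
def frac01 (x : ℝ) : ℝ := x - ⌈x⌉ + 1

/-- The constant coefficient `c_h(0)`. -/
def cH0 (N : ℕ) (h : ℤ × ℤ) : ℝ :=
  if ¬ ((N : ℤ) ∣ h.1) ∧ (N : ℤ) ∣ h.2 then 1 / 2 - frac01 ((h.1 : ℝ) / N)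
  else if ((N : ℤ) ∣ h.1) ∧ ¬ ((N : ℤ) ∣ h.2) then 1 / 2 - frac01 ((h.2 : ℝ) / N)
  else 0

/-- `c_{-1}(h)`: the number of components of `h` divisible by `N`. -/
def cMinus1 (N : ℕ) (h : ℤ × ℤ) : ℕ :=
  (if (N : ℤ) ∣ h.1 then 1 else 0) + (if (N : ℤ) ∣ h.2 then 1 else 0)

/-- The term of the shifted theta series `Θ̃_h(τ,t;ε)` indexed by `p ∈ ℤ²`,
corresponding to `x_j = h_j + N·p_j`. -/
def thetaTerm (N : ℕ) (h : ℤ × ℤ) (τ : ℂ) (t ε : ℝ) (p : ℤ × ℤ) : ℂ :=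
  phiTilde τ
      (iota N t (((h.1 + N * p.1 : ℤ) : ℝ) + ε) (((h.2 + N * p.2 : ℤ) : ℝ) + ε)).1
      (iota N t (((h.1 + N * p.1 : ℤ) : ℝ) + ε) (((h.2 + N * p.2 : ℤ) : ℝ) + ε)).2 *
    eC (((ε * (((h.1 + N * p.1 : ℤ) : ℝ) + ((h.2 + N * p.2 : ℤ) : ℝ) + 2 * ε) / N : ℝ) : ℂ))


lemma norm_eC (z : ℂ) : ‖eC z‖ = Real.exp (-(2 * Real.pi * z.im)) := by
  unfold eC
  rw [Complex.norm_exp]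
  congr 1
  simp

lemma norm_eC_real (x : ℝ) : ‖eC (x : ℂ)‖ = 1 := by
  rw [norm_eC]; simp

lemma eC_add (a b : ℂ) : eC (a + b) = eC a * eC b := by
  unfold eC
  rw [← Complex.exp_add]; congr 1; ring

lemma continuous_eC : Continuous eC := by
  unfold eC; fun_prop

lemma erfc_integrable : Integrable (fun r : ℝ => Real.exp (-(r ^ 2))) := by
  have := integrable_exp_neg_mul_sq (b := 1) one_pos
  simpa using this

lemma erfc_zero : erfc 0 = 1 := by
  unfold erfc
  have := integral_gaussian_Ioi 1
  simp only [neg_mul, one_mul, div_one] at this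
  rw [this]
  have : Real.sqrt Real.pi ≠ 0 := by positivity
  field_simp

lemma erfc_nonneg (x : ℝ) : 0 ≤ erfc x := by
  unfold erfc
  apply mul_nonneg (by positivity)
  exact setIntegral_nonneg measurableSet_Ioi (fun _ _ => by positivity)

lemma erfc_le {x : ℝ} (hx : 0 ≤ x) : erfc x ≤ Real.exp (-(x ^ 2)) := by
  have h0 := erfc_zero
  unfold erfc at h0 ⊢
  have h1 : ∫ r in Set.Ioi x, Real.exp (-(r ^ 2)) = ∫ r in Set.Ioi (0:ℝ), Real.exp (-((r + x) ^ 2)) := by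
    have := (measurePreserving_add_right (volume : Measure ℝ) x).setIntegral_preimage_emb
      (measurableEmbedding_addRight x) (fun r : ℝ => Real.exp (-(r ^ 2))) (Set.Ioi x)
    rw [← this]
    simp
  have h2 : ∫ r in Set.Ioi (0:ℝ), Real.exp (-((r + x) ^ 2)) ≤
      ∫ r in Set.Ioi (0:ℝ), Real.exp (-(x^2)) * Real.exp (-(r ^ 2)) := by
    apply setIntegral_mono_on
    · exact (erfc_integrable.comp_add_right x).integrableOn
    · exact (erfc_integrable.const_mul _).integrableOn
    · exact measurableSet_Ioi
    · intro r hr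
      rw [← Real.exp_add]
      apply Real.exp_le_exp.2
      have : 0 < r := hr
      nlinarith [mul_nonneg this.le hx]
  rw [integral_const_mul] at h2
  rw [h1]
  calc _ ≤ 2 / √Real.pi * (Real.exp (-(x^2)) * ∫ r in Set.Ioi (0:ℝ), Real.exp (-(r ^ 2))) := by
        gcongr
    _ = Real.exp (-(x^2)) * (2 / √Real.pi * ∫ r in Set.Ioi (0:ℝ), Real.exp (-(r ^ 2))) := by ring
    _ = _ := by rw [h0, mul_one]

lemma continuous_erfc : Continuous erfc := by
  have : erfc = fun x => (2 / √Real.pi) * ((∫ r in Set.Ioi (0:ℝ), Real.exp (-(r ^ 2)))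
      - ∫ r in (0:ℝ)..x, Real.exp (-(r ^ 2))) := by
    funext x
    unfold erfc
    rw [← intervalIntegral.integral_interval_add_Ioi (a := 0) (b := x) erfc_integrable.integrableOn
      erfc_integrable.integrableOn]
    ring
  rw [this]
  have : Continuous (fun x : ℝ => ∫ r in (0:ℝ)..x, Real.exp (-(r ^ 2))) :=
    intervalIntegral.continuous_primitive (fun a b => erfc_integrable.intervalIntegrable) 0
  fun_prop

lemma abs_sign_le (x : ℝ) : |Real.sign x| ≤ 1 := by
  rcases Real.sign_apply_eq x with h | h | h <;> simp [h]

lemma sign_tendsto {x : ℝ} (hx : x ≠ 0) : Tendsto Real.sign (nhds x) (nhds (Real.sign x)) := by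
  apply Tendsto.congr' _ tendsto_const_nhds
  rcases hx.lt_or_gt with h | h
  · filter_upwards [Iio_mem_nhds h] with y hy
    rw [Real.sign_of_neg h, Real.sign_of_neg hy]
  · filter_upwards [Ioi_mem_nhds h] with y hy
    rw [Real.sign_of_pos h, Real.sign_of_pos hy]

lemma continuous_serf (c : ℝ) :
    Continuous (fun s : ℝ => Real.sign s * (1 - erfc (c * |s|))) := by
  rw [continuous_iff_continuousAt]
  intro s
  have hc : Continuous (fun s : ℝ => 1 - erfc (c * |s|)) := by
    have := continuous_erfc; fun_prop
  by_cases hs : s = 0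
  · subst hs
    have h2 := hc.tendsto 0
    simp only [abs_zero, mul_zero, erfc_zero, sub_self] at h2
    unfold ContinuousAt
    simp only [Real.sign_zero, zero_mul]
    apply squeeze_zero_norm _ (by simpa using h2.norm)
    intro s
    rw [norm_mul]
    calc _ ≤ 1 * ‖1 - erfc (c * |s|)‖ := by
          gcongr; exact abs_sign_le s
      _ = _ := one_mul _
  · exact (sign_tendsto hs).mul (hc.tendsto s)

def kS (N : ℕ) (t : ℝ) (a b : ℝ) : ℝ := (iota N t a b).1

lemma iota_diff (N : ℕ) (hN : 0 < N) (t : ℝ) (ht : 0 < t) (a b : ℝ) :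
    (iota N t a b).2 ^ 2 - (iota N t a b).1 ^ 2 = - (2 * a * b / N) := by
  have : (0:ℝ) < N := by exact_mod_cast hN
  simp only [iota, div_pow]
  rw [Real.sq_sqrt (by positivity)]
  field_simp
  ring

lemma phiStar_iota (N : ℕ) (hN : 0 < N) (τ : ℂ) (t : ℝ) (ht : 0 < t) (a b : ℝ) :
    phiStar τ (iota N t a b).1 (iota N t a b).2 =
      eC (-((a * b / N : ℝ) : ℂ) * τ) * (Real.sign (kS N t a b) : ℂ) *
        (erfc (Real.sqrt (2 * Real.pi * τ.im) * |kS N t a b|) : ℂ) := by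
  unfold phiStar kS
  congr 3
  congr 1
  rw [← Complex.ofReal_pow, ← Complex.ofReal_pow, ← Complex.ofReal_sub, iota_diff N hN t ht]
  push_cast
  ring

lemma phiPlus_iota (N : ℕ) (hN : 0 < N) (τ : ℂ) (t : ℝ) (ht : 0 < t) (a b : ℝ) :
    phiPlus τ (iota N t a b).1 (iota N t a b).2 =
      eC (-((a * b / N : ℝ) : ℂ) * τ) * (Real.sign (kS N t a b) : ℂ) *
        (if a * b < 0 then 1 else 0) := by
  unfold phiPlus kS
  have hN' : (0:ℝ) < N := by exact_mod_cast hN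
  have h := iota_diff N hN t ht a b
  have e : (iota N t a b).1 ^ 2 < (iota N t a b).2 ^ 2 ↔ a * b < 0 := by
    rw [← sub_pos, h, neg_pos, div_lt_iff₀ hN']
    constructor <;> intro h <;> linarith
  simp only [e]
  congr 3
  rw [← Complex.ofReal_pow, ← Complex.ofReal_pow, ← Complex.ofReal_sub, iota_diff N hN t ht]
  push_cast
  ring

lemma kS_eq (N : ℕ) (t a b : ℝ) : kS N t a b = (t⁻¹ * a + t * b) / Real.sqrt (2 * N) := rfl

lemma kS_sq (N : ℕ) (hN : 0 < N) (t : ℝ) (ht : 0 < t) (a b : ℝ) :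
    (kS N t a b)^2 = a * b / N + ((t⁻¹ * a)^2 + (t*b)^2) / (2 * N) := by
  have : (0:ℝ) < N := by exact_mod_cast hN
  rw [kS_eq, div_pow, Real.sq_sqrt (by positivity)]
  field_simp
  ring

lemma norm_phiStar_le (N : ℕ) (hN : 0 < N) (τ : ℂ) (hτ : 0 < τ.im) (t : ℝ) (ht : 0 < t) (a b : ℝ) :
    ‖phiStar τ (iota N t a b).1 (iota N t a b).2‖ ≤
      Real.exp (-(Real.pi * τ.im / N * ((t⁻¹ * a)^2 + (t*b)^2))) := by
  rw [phiStar_iota N hN τ t ht, norm_mul, norm_mul, norm_eC, Complex.norm_real, Complex.norm_real,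
    Real.norm_eq_abs, Real.norm_eq_abs, abs_of_nonneg (erfc_nonneg _)]
  have h1 := erfc_le (x := Real.sqrt (2 * Real.pi * τ.im) * |kS N t a b|) (by positivity)
  rw [mul_pow, Real.sq_sqrt (by positivity), sq_abs, kS_sq N hN t ht] at h1
  calc _ ≤ Real.exp (-(2 * Real.pi * (-((a * b / N : ℝ) : ℂ) * τ).im)) * 1 *
        Real.exp (-(2 * Real.pi * τ.im *
          (a * b / N + ((t⁻¹ * a)^2 + (t*b)^2) / (2 * N)))) := by
        gcongr
        · exact erfc_nonneg _
        · exact abs_sign_le _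
    _ = _ := by
        rw [mul_one, ← Real.exp_add]
        congr 1
        rw [← Complex.ofReal_neg, Complex.im_ofReal_mul]
        have : (0:ℝ) < N := by exact_mod_cast hN
        field_simp
        ring

lemma norm_phiPlus_le (N : ℕ) (hN : 0 < N) (τ : ℂ) (t : ℝ) (ht : 0 < t) (a b : ℝ) :
    ‖phiPlus τ (iota N t a b).1 (iota N t a b).2‖ ≤
      if a * b < 0 then Real.exp (2 * Real.pi * τ.im / N * (a * b)) else 0 := by
  rw [phiPlus_iota N hN τ t ht]
  split_ifs with h
  · rw [norm_mul, norm_mul, norm_eC, Complex.norm_real, Real.norm_eq_abs, norm_one, mul_one]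
    calc _ ≤ Real.exp (-(2 * Real.pi * (-((a * b / N : ℝ) : ℂ) * τ).im)) * 1 := by
          gcongr
          exact abs_sign_le _
      _ = _ := by
          rw [mul_one]
          congr 1
          rw [← Complex.ofReal_neg, Complex.im_ofReal_mul]
          ring
  · simp

/-- the part of the theta term without the singular contributions on the axes -/
def Apart (N : ℕ) (τ : ℂ) (t : ℝ) (m n : ℤ) (ε : ℝ) : ℂ :=
  ((if m ≠ 0 ∧ n ≠ 0 then
      phiPlus τ (iota N t (m + ε) (n + ε)).1 (iota N t (m + ε) (n + ε)).2 else 0)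
    - phiStar τ (iota N t (m + ε) (n + ε)).1 (iota N t (m + ε) (n + ε)).2) *
    eC (((ε * ((m : ℝ) + (n : ℝ) + 2 * ε) / N : ℝ) : ℂ))

lemma shift_sq (m : ℤ) {ε : ℝ} (h0 : 0 ≤ ε) (h1 : ε ≤ 1 / 2) :
    |(m : ℝ)| / 4 ≤ ((m : ℝ) + ε) ^ 2 := by
  rcases le_or_gt 0 m with h | h
  · have h' : (0:ℝ) ≤ m := by exact_mod_cast h
    rw [abs_of_nonneg h']
    have : (m:ℝ) ≤ (m:ℝ)^2 := by
      have : m ≤ m^2 := by nlinarith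
      exact_mod_cast this
    nlinarith
  · have h' : (m:ℝ) ≤ -1 := by exact_mod_cast (by omega : m ≤ -1)
    rw [abs_of_neg (by linarith)]
    nlinarith

lemma shift_mul (m n : ℤ) (hm : m ≠ 0) (hn : n ≠ 0) {ε : ℝ} (h0 : 0 ≤ ε) (h1 : ε ≤ 1 / 2)
    (h : ((m : ℝ) + ε) * ((n : ℝ) + ε) < 0) :
    ((m : ℝ) + ε) * ((n : ℝ) + ε) ≤ - ((|(m : ℝ)| + |(n : ℝ)|) / 8) := by
  have key : ∀ m n : ℤ, m < 0 → 0 < n →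
      ((m : ℝ) + ε) * ((n : ℝ) + ε) ≤ - ((|(m : ℝ)| + |(n : ℝ)|) / 8) := by
    intro m n hm hn
    have hm' : (m:ℝ) ≤ -1 := by exact_mod_cast (by omega : m ≤ -1)
    have hn' : (1:ℝ) ≤ n := by exact_mod_cast (by omega : 1 ≤ n)
    rw [abs_of_neg (by linarith), abs_of_pos (by linarith)]
    have e1 : (m:ℝ) + ε ≤ m / 2 := by linarith
    have e2 : (n:ℝ) ≤ n + ε := by linarith
    have e3 : ((m : ℝ) + ε) * ((n : ℝ) + ε) ≤ m / 2 * n := by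
      nlinarith
    nlinarith
  rcases hm.lt_or_gt with hm | hm <;> rcases hn.lt_or_gt with hn | hn
  · exfalso
    have hm' : (m:ℝ) ≤ -1 := by exact_mod_cast (by omega : m ≤ -1)
    have hn' : (n:ℝ) ≤ -1 := by exact_mod_cast (by omega : n ≤ -1)
    nlinarith
  · exact key m n hm hn
  · have := key n m hn hm
    linarith
  · exfalso
    have hm' : (1:ℝ) ≤ m := by exact_mod_cast (by omega : 1 ≤ m)
    have hn' : (1:ℝ) ≤ n := by exact_mod_cast (by omega : 1 ≤ n)
    nlinarith

lemma Apart_bound (N : ℕ) (hN : 0 < N) (τ : ℂ) (hτ : 0 < τ.im) (t : ℝ) (ht : 0 < t) :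
    ∃ c : ℝ, 0 < c ∧ ∀ (m n : ℤ) (ε : ℝ), 0 ≤ ε → ε ≤ 1 / 2 →
      ‖Apart N τ t m n ε‖ ≤ 2 * Real.exp (-(c * (|(m : ℝ)| + |(n : ℝ)|))) := by
  have hN' : (0:ℝ) < N := by exact_mod_cast hN
  set μ : ℝ := min (min ((t⁻¹)^2) (t^2)) 1 with hμ
  have hμ0 : 0 < μ := by positivity
  have hμ1 : μ ≤ (t⁻¹)^2 := (min_le_left _ _).trans (min_le_left _ _)
  have hμ2 : μ ≤ t^2 := (min_le_left _ _).trans (min_le_right _ _)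
  have hμ3 : μ ≤ 1 := min_le_right _ _
  set K : ℝ := Real.pi * τ.im / N with hK
  have hK0 : 0 < K := by positivity
  refine ⟨K * μ / 4, by positivity, ?_⟩
  intro m n ε h0 h1
  unfold Apart
  rw [norm_mul, norm_eC_real, mul_one, two_mul]
  refine (norm_sub_le _ _).trans (add_le_add ?_ ?_)
  · split_ifs with hmn
    · refine (norm_phiPlus_le N hN τ t ht _ _).trans ?_
      split_ifs with hlt
      · apply Real.exp_le_exp.2
        have := shift_mul m n hmn.1 hmn.2 h0 h1 hlt
        have e : 2 * Real.pi * τ.im / N * (((m : ℝ) + ε) * ((n : ℝ) + ε))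
          = K * (2 * (((m : ℝ) + ε) * ((n : ℝ) + ε))) := by rw [hK]; ring
        rw [e]
        have e2 : -(K * μ / 4 * (|(m:ℝ)| + |(n:ℝ)|)) = K * (-(μ / 4 * (|(m:ℝ)| + |(n:ℝ)|))) := by ring
        rw [e2]
        apply mul_le_mul_of_nonneg_left _ hK0.le
        have : 0 ≤ |(m:ℝ)| + |(n:ℝ)| := by positivity
        nlinarith
      · positivity
    · simp; positivity
  · refine (norm_phiStar_le N hN τ hτ t ht _ _).trans ?_
    apply Real.exp_le_exp.2
    rw [neg_le_neg_iff, mul_div_assoc, mul_assoc]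
    apply mul_le_mul_of_nonneg_left _ hK0.le
    have e1 := shift_sq m h0 h1
    have e2 := shift_sq n h0 h1
    rw [mul_pow, mul_pow]
    have := mul_le_mul hμ1 e1 (by positivity) (by positivity)
    have := mul_le_mul hμ2 e2 (by positivity) (by positivity)
    linarith

lemma summable_exp_int (c : ℝ) (hc : 0 < c) : Summable (fun p : ℤ => Real.exp (-(c * |(p:ℝ)|))) := by
  have h : Summable (fun n : ℕ => Real.exp (-(c * (n:ℝ)))) := by
    have := Real.summable_exp_nat_mul_iff (a := -c)
    have := this.2 (by linarith)
    refine this.congr (fun n => ?_)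
    congr 1; ring
  apply Summable.of_nat_of_neg
  · simpa using h
  · simpa using h

lemma summable_exp_shift (N : ℕ) (hN : 0 < N) (h : ℤ) (c : ℝ) (hc : 0 < c) :
    Summable (fun p : ℤ => Real.exp (-(c * |((h + N * p : ℤ):ℝ)|))) := by
  apply Summable.of_nonneg_of_le (fun _ => by positivity) _
    ((summable_exp_int c hc).mul_left (Real.exp (c * |(h:ℝ)|)))
  intro p
  rw [← Real.exp_add]
  apply Real.exp_le_exp.2
  have hN' : (1:ℝ) ≤ N := by exact_mod_cast hN
  have : |(p:ℝ)| ≤ |((h + N * p : ℤ):ℝ)| + |(h:ℝ)| := by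
    calc |(p:ℝ)| ≤ N * |(p:ℝ)| := by nlinarith [abs_nonneg (p:ℝ)]
      _ = |((h + N * p : ℤ):ℝ) - h| := by
        push_cast
        rw [add_sub_cancel_left, abs_mul, Nat.abs_cast]
      _ ≤ _ := abs_sub _ _
  nlinarith

lemma summable_bound (N : ℕ) (hN : 0 < N) (h : ℤ × ℤ) (c : ℝ) (hc : 0 < c) :
    Summable (fun p : ℤ × ℤ => 2 * Real.exp (-(c * (|((h.1 + N * p.1 : ℤ):ℝ)|
      + |((h.2 + N * p.2 : ℤ):ℝ)|)))) := by
  apply Summable.mul_left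
  have := (summable_exp_shift N hN h.1 c hc).mul_of_nonneg (summable_exp_shift N hN h.2 c hc)
    (fun _ => by positivity) (fun _ => by positivity)
  refine this.congr (fun p => ?_)
  simp only [← Real.exp_add]
  congr 1; ring

lemma Apart_tendsto (N : ℕ) (hN : 0 < N) (τ : ℂ) (t : ℝ) (ht : 0 < t) (m n : ℤ) :
    Tendsto (Apart N τ t m n) (nhdsWithin 0 (Set.Ioi 0))
      (nhds (Apart N τ t m n 0 - if m = 0 ∧ n = 0 then 1 else 0)) := by
  set c := Real.sqrt (2 * Real.pi * τ.im)
  set s : ℝ → ℝ := fun ε => kS N t (m + ε) (n + ε) with hs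
  set E : ℝ → ℂ := fun ε => eC (-((((m:ℝ) + ε) * ((n:ℝ) + ε) / N : ℝ) : ℂ) * τ)
  set E' : ℝ → ℂ := fun ε => eC (((ε * ((m : ℝ) + (n : ℝ) + 2 * ε) / N : ℝ) : ℂ))
  set f : ℝ → ℝ := fun s : ℝ => Real.sign s * (1 - erfc (c * |s|)) with hf
  set J : ℝ → ℝ := fun ε => (if m ≠ 0 ∧ n ≠ 0 ∧ ((m:ℝ) + ε) * ((n:ℝ) + ε) < 0 then 0 else 1)
    * Real.sign (s ε) with hJ
  have hN' : (0:ℝ) < N := by exact_mod_cast hN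
  have hA : Apart N τ t m n = fun ε => E ε * ((f (s ε) : ℂ) - (J ε : ℂ)) * E' ε := by
    funext ε
    unfold Apart
    rw [phiPlus_iota N hN τ t ht, phiStar_iota N hN τ t ht]
    change _ = eC _ * _ * eC _
    congr 1
    simp only [hf, hJ, hs]
    by_cases h1 : m ≠ 0 ∧ n ≠ 0
    · by_cases h2 : ((m:ℝ) + ε) * ((n:ℝ) + ε) < 0
      · simp only [h1, h2, true_and, if_true, and_self, ne_eq, not_false_eq_true]
        push_cast
        ring
      · simp only [h1, h2, true_and, if_true, if_false, and_false, and_self, ne_eq, not_false_eq_true]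
        push_cast
        ring
    · have h3 : ¬ (m ≠ 0 ∧ n ≠ 0 ∧ ((m:ℝ) + ε) * ((n:ℝ) + ε) < 0) := by tauto
      rw [if_neg h1, if_neg h3]
      push_cast
      ring
  have hsc : Continuous s := by
    have : s = fun ε : ℝ => (t⁻¹ * (m + ε) + t * (n + ε)) / Real.sqrt (2 * N) := rfl
    rw [this]
    fun_prop
  have hE : Continuous E := continuous_eC.comp (by fun_prop)
  have hE' : Continuous E' := continuous_eC.comp (by fun_prop)
  have hfs : Continuous (fun ε => f (s ε)) := (continuous_serf c).comp hsc
  have hs0 : s 0 = (t⁻¹ * m + t * n) / Real.sqrt (2 * N) := by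
    simp only [hs, kS_eq, add_zero]
  have hJl : Tendsto J (nhdsWithin 0 (Set.Ioi 0)) (nhds (J 0 + if m = 0 ∧ n = 0 then 1 else 0)) := by
    have hprod : Continuous (fun ε : ℝ => ((m:ℝ) + ε) * ((n:ℝ) + ε)) := by fun_prop
    by_cases h00 : m = 0 ∧ n = 0
    · obtain ⟨rfl, rfl⟩ := h00
      have : s 0 = 0 := by rw [hs0]; simp
      have hJ0 : J 0 = 0 := by simp [hJ, this]
      rw [hJ0]
      simp only [and_self, if_true, zero_add]
      apply Tendsto.congr' _ tendsto_const_nhds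
      filter_upwards [self_mem_nhdsWithin] with ε hε
      have hε : 0 < ε := hε
      have : 0 < s ε := by
        simp only [hs, kS_eq]
        simp only [Int.cast_zero, zero_add]
        positivity
      simp [hJ, Real.sign_of_pos this]
    · rw [if_neg h00, add_zero]
      apply tendsto_nhdsWithin_of_tendsto_nhds
      by_cases hneg : (m:ℝ) * n < 0
      · have hm : m ≠ 0 := by rintro rfl; simp at hneg
        have hn : n ≠ 0 := by rintro rfl; simp at hneg
        have hJ0 : J 0 = 0 := by simp [hJ, hm, hn, hneg]
        rw [hJ0]
        apply Tendsto.congr' _ tendsto_const_nhds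
        have := hprod.tendsto 0
        simp only [add_zero] at this
        filter_upwards [this.eventually (Iio_mem_nhds hneg)] with ε hε
        have hε : ((m:ℝ) + ε) * ((n:ℝ) + ε) < 0 := hε
        simp [hJ, hm, hn, hε]
      · push Not at hneg
        have hsne : s 0 ≠ 0 := by
          rw [hs0]
          intro h
          have hq : Real.sqrt (2 * N) ≠ 0 := by positivity
          have h1 : t⁻¹ * m + t * n = 0 := by
            rcases div_eq_zero_iff.1 h with h | h
            · exact h
            · exact absurd h hq
          have h2 : (t⁻¹ * m)^2 + (t * n)^2 + 2 * (m * n) = 0 := by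
            have : (t⁻¹ * m + t * n)^2 = 0 := by rw [h1]; simp
            rw [← this]; field_simp; ring
          have h3 : (t⁻¹ * m)^2 = 0 := by nlinarith [sq_nonneg (t⁻¹ * (m:ℝ)), sq_nonneg (t * (n:ℝ))]
          have h4 : (t * n)^2 = 0 := by nlinarith [sq_nonneg (t⁻¹ * (m:ℝ)), sq_nonneg (t * (n:ℝ))]
          apply h00
          constructor
          · simpa [ht.ne'] using h3
          · simpa [ht.ne'] using h4
        have hsign : Tendsto (fun ε => Real.sign (s ε)) (nhds 0) (nhds (Real.sign (s 0))) :=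
          (sign_tendsto hsne).comp (hsc.tendsto 0)
        have hJ0 : J 0 = Real.sign (s 0) := by
          simp [hJ, not_lt.2 hneg]
        rw [hJ0]
        apply hsign.congr'
        by_cases hmn : m ≠ 0 ∧ n ≠ 0
        · have hpos : 0 < (m:ℝ) * n := lt_of_le_of_ne hneg (by
            have := hmn.1; have := hmn.2
            symm
            simpa using hmn)
          have := hprod.tendsto 0
          simp only [add_zero] at this
          filter_upwards [this.eventually (Ioi_mem_nhds hpos)] with ε hε
          have hε : 0 < ((m:ℝ) + ε) * ((n:ℝ) + ε) := hε
          simp [hJ, not_lt.2 hε.le]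
        · refine Eventually.of_forall (fun ε => ?_)
          have h3 : ¬ (m ≠ 0 ∧ n ≠ 0 ∧ ((m:ℝ) + ε) * ((n:ℝ) + ε) < 0) := by tauto
          simp only [hJ]
          rw [if_neg h3, one_mul]
  have hlim : Tendsto (fun ε => E ε * ((f (s ε) : ℂ) - (J ε : ℂ)) * E' ε) (nhdsWithin 0 (Set.Ioi 0))
      (nhds (E 0 * ((f (s 0) : ℂ) - ((J 0 + if m = 0 ∧ n = 0 then 1 else 0 : ℝ) : ℂ)) * E' 0)) := by
    have w : ∀ {g : ℝ → ℂ}, Continuous g → Tendsto g (nhdsWithin 0 (Set.Ioi 0)) (nhds (g 0)) :=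
      fun hg => tendsto_nhdsWithin_of_tendsto_nhds (hg.tendsto 0)
    refine ((w hE).mul (Tendsto.sub ?_ ?_)).mul (w hE')
    · exact w (g := fun ε => (f (s ε) : ℂ)) (Complex.continuous_ofReal.comp hfs)
    · exact (Complex.continuous_ofReal.tendsto _).comp hJl
  rw [hA]
  convert hlim using 2
  by_cases h00 : m = 0 ∧ n = 0
  · obtain ⟨rfl, rfl⟩ := h00
    have e1 : E 0 = 1 := by simp [E, eC]
    have e2 : E' 0 = 1 := by simp [E', eC]
    simp only [e1, e2, and_self, if_true]
    push_cast
    ring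
  · simp [if_neg h00]

/-- the singular contribution on an axis -/
def Gax (N : ℕ) (τ : ℂ) (ε : ℝ) (a b : ℤ) (p : ℤ × ℤ) : ℂ :=
  if a + N * p.1 = 0 ∧ b + N * p.2 < 0 then
    -(eC (-((ε * (((b + N * p.2 : ℤ) : ℝ) + ε) / N : ℝ) : ℂ) * τ) *
      eC (((ε * (((b + N * p.2 : ℤ) : ℝ) + 2 * ε) / N : ℝ) : ℂ)))
  else 0

/-- the sum of the singular contribution -/
def Gsum (N : ℕ) (τ : ℂ) (r ε : ℝ) : ℂ :=
  -(Complex.exp (2 * Real.pi * Complex.I * (2 - τ) / N * ε ^ 2) *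
    Complex.exp (r * (2 * Real.pi * Complex.I * (τ - 1) * ε)) *
      (1 - Complex.exp (2 * Real.pi * Complex.I * (τ - 1) * ε))⁻¹)

lemma norm_q_lt (τ : ℂ) (hτ : 0 < τ.im) (ε : ℝ) (hε : 0 < ε) :
    ‖Complex.exp (2 * Real.pi * Complex.I * (τ - 1) * ε)‖ < 1 := by
  rw [Complex.norm_exp, Real.exp_lt_one_iff]
  have : (2 * Real.pi * Complex.I * (τ - 1) * ε : ℂ).re = -(2 * Real.pi * τ.im * ε) := by
    simp
  rw [this]
  have : 0 < 2 * Real.pi * τ.im * ε := by positivity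
  linarith

lemma Gax_hasSum (N : ℕ) (hN : 0 < N) (τ : ℂ) (hτ : 0 < τ.im) (ε : ℝ) (hε : 0 < ε) (a b : ℤ)
    (ha : (N : ℤ) ∣ a) :
    HasSum (Gax N τ ε a b) (Gsum N τ (frac01 (-((b : ℝ) / N))) ε) := by
  obtain ⟨a', rfl⟩ := ha
  have hN' : (0:ℝ) < N := by exact_mod_cast hN
  set C : ℤ := ⌈-((b : ℝ) / N)⌉ with hC
  set r : ℝ := frac01 (-((b : ℝ) / N)) with hr
  have hrC : r = -((b : ℝ) / N) - C + 1 := rfl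
  let g : ℕ → ℤ × ℤ := fun k => (-a', C - 1 - k)
  have hg : Function.Injective g := by
    intro k l hkl
    have := congrArg Prod.snd hkl
    simp only [g] at this
    omega
  have hC1 := Int.le_ceil (-((b : ℝ) / N))
  have hC2 := Int.ceil_lt_add_one (-((b : ℝ) / N))
  rw [← hC] at hC1 hC2
  have hlt : ∀ q : ℤ, b + N * q < 0 ↔ q ≤ C - 1 := by
    intro q
    have e : b + N * q < 0 ↔ (q : ℝ) < -((b : ℝ) / N) := by
      rw [← neg_div, lt_div_iff₀ hN']
      constructor
      · intro h
        have : ((b + N * q : ℤ) : ℝ) < 0 := by exact_mod_cast h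
        push_cast at this
        linarith
      · intro h
        have : ((b + N * q : ℤ) : ℝ) < 0 := by push_cast; linarith
        exact_mod_cast this
    rw [e, ← Int.lt_ceil]
    omega
  rw [← hg.hasSum_iff]
  · have hgeo := hasSum_geometric_of_norm_lt_one (norm_q_lt τ hτ ε hε)
    have := (hgeo.mul_left (Complex.exp (2 * Real.pi * Complex.I * (2 - τ) / N * ε ^ 2) *
    Complex.exp (r * (2 * Real.pi * Complex.I * (τ - 1) * ε)))).neg
    unfold Gsum
    refine (funext fun k => ?_ : Gax N τ ε (N * a') b ∘ g = _) ▸ this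
    simp only [Function.comp, g, Gax]
    rw [if_pos ⟨by ring, (hlt _).2 (by omega)⟩]
    congr 1
    unfold eC
    rw [← Complex.exp_add, ← Complex.exp_nat_mul, ← Complex.exp_add, ← Complex.exp_add]
    congr 1
    have hrC' : (r:ℂ) = -((b : ℂ) / N) - C + 1 := by rw [hrC]; push_cast; ring
    rw [hrC']
    have : (N:ℂ) ≠ 0 := by exact_mod_cast hN.ne'
    push_cast
    field_simp
    ring
  · intro p hp
    unfold Gax
    rw [if_neg]
    rintro ⟨h1, h2⟩
    apply hp
    refine ⟨(C - 1 - p.2).toNat, ?_⟩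
    have h3 := (hlt _).1 h2
    have h4 : p.1 = -a' := by
      have : (N:ℤ) * (a' + p.1) = 0 := by rw [← h1]; ring
      rcases mul_eq_zero.1 this with h | h
      · exfalso; omega
      · omega
    ext
    · simp [g, h4]
    · simp only [g]; omega

lemma Gax_zero (N : ℕ) (τ : ℂ) (ε : ℝ) (a b : ℤ) (ha : ¬ (N : ℤ) ∣ a) :
    Gax N τ ε a b = fun _ => 0 := by
  funext p
  unfold Gax
  rw [if_neg]
  rintro ⟨h1, -⟩
  exact ha ⟨-p.1, by linarith⟩

lemma exp_second : Tendsto (fun z : ℂ => (Complex.exp z - 1 - z) / z ^ 2) (nhdsWithin 0 {0}ᶜ)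
    (nhds (1 / 2)) := by
  rw [tendsto_iff_norm_sub_tendsto_zero]
  have hz : Tendsto (fun z : ℂ => ‖z‖) (nhdsWithin 0 {0}ᶜ) (nhds 0) := by
    have := (continuous_norm (E := ℂ)).tendsto 0
    rw [norm_zero] at this
    exact tendsto_nhdsWithin_of_tendsto_nhds this
  refine squeeze_zero' (Eventually.of_forall fun _ => norm_nonneg _) ?_ hz
  have h1 : ∀ᶠ z : ℂ in nhdsWithin 0 {0}ᶜ, ‖z‖ < 1 := hz.eventually (Iio_mem_nhds one_pos)
  filter_upwards [h1, self_mem_nhdsWithin] with z hz1 hz0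
  have hz0 : z ≠ 0 := hz0
  have hb := Complex.exp_bound (x := z) hz1.le (n := 3) (by norm_num)
  have e : (Complex.exp z - 1 - z) / z ^ 2 - 1 / 2
      = (Complex.exp z - ∑ m ∈ Finset.range 3, z ^ m / (m.factorial : ℂ)) / z ^ 2 := by
    simp [Finset.sum_range_succ, Nat.factorial]
    field_simp
    ring
  rw [e, norm_div, norm_pow, div_le_iff₀ (by positivity)]
  refine hb.trans ?_
  have : ((Nat.succ 3 : ℕ) * ((Nat.factorial 3 : ℕ) * (3:ℕ) : ℝ)⁻¹ : ℝ) ≤ 1 := by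
    norm_num [Nat.factorial]
  calc _ ≤ ‖z‖ ^ 3 * 1 := by gcongr
    _ = _ := by ring

lemma Gsum_tendsto (N : ℕ) (τ : ℂ) (hτ : 0 < τ.im) (r : ℝ) :
    Tendsto (fun ε : ℝ => Gsum N τ r ε - 1 / (2 * Real.pi * Complex.I * (τ - 1) * ε))
      (nhdsWithin 0 (Set.Ioi 0)) (nhds ((r : ℂ) - 1 / 2)) := by
  set ω : ℂ := 2 * Real.pi * Complex.I * (τ - 1) with hω
  set κ : ℂ := 2 * Real.pi * Complex.I * (2 - τ) / N with hκ
  have hω0 : ω ≠ 0 := by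
    have : τ - 1 ≠ 0 := by
      intro h
      have := congrArg Complex.im h
      simp at this
      linarith
    have hpi : (Real.pi : ℂ) ≠ 0 := by exact_mod_cast Real.pi_ne_zero
    simp only [hω, ne_eq, mul_eq_zero, OfNat.ofNat_ne_zero, hpi, Complex.I_ne_zero, this, or_self,
      not_false_eq_true]
  have hzc : Continuous (fun ε : ℝ => ω * (ε : ℂ)) := by fun_prop
  have hz : Tendsto (fun ε : ℝ => ω * (ε : ℂ)) (nhdsWithin 0 (Set.Ioi 0)) (nhdsWithin 0 {0}ᶜ) := by
    apply tendsto_nhdsWithin_iff.2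
    constructor
    · have := hzc.tendsto 0
      simp only [Complex.ofReal_zero, mul_zero] at this
      exact tendsto_nhdsWithin_of_tendsto_nhds this
    · filter_upwards [self_mem_nhdsWithin] with ε hε
      have hε : 0 < ε := hε
      have : (ε:ℂ) ≠ 0 := by exact_mod_cast hε.ne'
      simp [hω0, hε.ne']
  have hz' : Tendsto (fun ε : ℝ => ω * (ε : ℂ)) (nhdsWithin 0 (Set.Ioi 0)) (nhds 0) :=
    hz.mono_right nhdsWithin_le_nhds
  have hQ2 := exp_second.comp hz
  -- derivative of the exponential prefactor
  have hD : HasDerivAt (fun z : ℂ => Complex.exp (κ / ω ^ 2 * z ^ 2 + r * z)) (r : ℂ) 0 := by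
    have h1 : HasDerivAt (fun z : ℂ => κ / ω ^ 2 * z ^ 2 + r * z)
        (κ / ω ^ 2 * (2 * 0) + r * 1) 0 := by
      have := ((hasDerivAt_pow 2 (0:ℂ)).const_mul (κ / ω ^ 2)).fun_add
        ((hasDerivAt_id' (0:ℂ)).const_mul (r:ℂ))
      exact this.congr_deriv (by simp)
    have := h1.cexp
    simpa using this
  have hD2 := (hasDerivAt_iff_tendsto_slope.1 hD).comp hz
  -- q -> 1
  have hq : Tendsto (fun ε : ℝ => 1 + (ω * (ε : ℂ)) *
      ((Complex.exp (ω * (ε : ℂ)) - 1 - ω * (ε : ℂ)) / (ω * (ε : ℂ)) ^ 2))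
      (nhdsWithin 0 (Set.Ioi 0)) (nhds 1) := by
    have := (hz'.mul hQ2).const_add 1
    simpa using this
  have hfin := (hD2.sub hQ2).mul (hq.inv₀ one_ne_zero)
  simp only [inv_one, mul_one] at hfin
  refine hfin.congr' ?_
  filter_upwards [self_mem_nhdsWithin] with ε hε
  have hε : 0 < ε := hε
  have hlt := norm_q_lt τ hτ ε hε
  rw [← hω] at hlt
  have hε' : (ε:ℂ) ≠ 0 := by exact_mod_cast hε.ne'
  have hz0 : ω * (ε:ℂ) ≠ 0 := mul_ne_zero hω0 hε'
  simp only [Function.comp, Gsum, slope_def_field, ← hω, ← hκ]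
  have e1 : κ / ω ^ 2 * (ω * (ε:ℂ)) ^ 2 + r * (ω * (ε:ℂ)) = κ * (ε:ℂ) ^ 2 + r * (ω * (ε:ℂ)) := by
    field_simp
  rw [e1]
  rw [← Complex.exp_add]
  generalize Complex.exp (κ * (ε:ℂ) ^ 2 + r * (ω * (ε:ℂ))) = P
  generalize hzz : ω * (ε:ℂ) = z at *
  have hne : Complex.exp z - 1 ≠ 0 := by
    intro h
    rw [sub_eq_zero.1 h] at hlt
    simp at hlt
  have hne' : 1 - Complex.exp z ≠ 0 := by
    intro h; apply hne; rw [← neg_sub, h, neg_zero]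
  generalize Complex.exp z = q at *
  have e2 : 1 + z * ((q - 1 - z) / z ^ 2) = (q - 1) / z := by
    field_simp; ring
  rw [e2]
  have e3 : (1 - q)⁻¹ = - (q - 1)⁻¹ := by rw [← neg_sub, inv_neg]
  rw [e3]
  simp
  field_simp
  ring

lemma frac01_of_dvd (N : ℕ) (hN : 0 < N) (a : ℤ) (h : (N:ℤ) ∣ a) : frac01 (-((a:ℝ) / N)) = 1 := by
  obtain ⟨k, rfl⟩ := h
  have hN' : (N:ℝ) ≠ 0 := by exact_mod_cast hN.ne'
  have : -(((N * k : ℤ) : ℝ) / N) = ((-k : ℤ) : ℝ) := by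
    push_cast; field_simp
  rw [this]
  unfold frac01
  rw [Int.ceil_intCast]
  ring

lemma frac01_neg (N : ℕ) (hN : 0 < N) (a : ℤ) (h : ¬ (N:ℤ) ∣ a) :
    frac01 (-((a:ℝ) / N)) = 1 - frac01 ((a:ℝ) / N) := by
  have hN' : (N:ℝ) ≠ 0 := by exact_mod_cast hN.ne'
  have hce : ⌈(a:ℝ) / N⌉ = ⌊(a:ℝ) / N⌋ + 1 := by
    rw [Int.ceil_eq_iff]
    have h1 := Int.floor_le ((a:ℝ) / N)
    have h2 := Int.lt_floor_add_one ((a:ℝ) / N)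
    push_cast
    refine ⟨?_, h2.le⟩
    rw [add_sub_cancel_right]
    refine lt_of_le_of_ne h1 ?_
    intro h3
    apply h
    refine ⟨⌊(a:ℝ) / N⌋, ?_⟩
    have : (a:ℝ) = N * ⌊(a:ℝ) / N⌋ := by
      rw [h3]; field_simp
    exact_mod_cast this
  unfold frac01
  rw [Int.ceil_neg, hce]
  push_cast
  ring

lemma thetaTerm_zero (N : ℕ) (hN : 0 < N) (h : ℤ × ℤ) (τ : ℂ) (t : ℝ) (ht : 0 < t) (p : ℤ × ℤ) :
    thetaTerm N h τ t 0 p = Apart N τ t (h.1 + N * p.1) (h.2 + N * p.2) 0 := by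
  unfold thetaTerm Apart phiTilde
  split_ifs with hc
  · rfl
  · congr 2
    rw [phiPlus_iota N hN τ t ht, if_neg, mul_zero]
    rw [add_zero, add_zero, ← Int.cast_mul]
    intro h1
    have h1 : (h.1 + N * p.1) * (h.2 + N * p.2) < 0 := by exact_mod_cast h1
    apply hc
    constructor
    · intro h; rw [h] at h1; simp at h1
    · intro h; rw [h] at h1; simp at h1

lemma axis_val (N : ℕ) (hN : 0 < N) (τ : ℂ) (t : ℝ) (ht : 0 < t) (ε : ℝ) (hε : 0 < ε)
    (h1 : ε < 1 / (1 + t ^ 2)) (h2 : ε < t ^ 2 / (1 + t ^ 2)) (m n : ℤ) :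
    (if m ≠ 0 ∧ n ≠ 0 then 0 else
      phiPlus τ (iota N t (m + ε) (n + ε)).1 (iota N t (m + ε) (n + ε)).2) *
        eC (((ε * ((m : ℝ) + (n : ℝ) + 2 * ε) / N : ℝ) : ℂ)) =
    (if m = 0 ∧ n < 0 then -(eC (-((ε * ((n : ℝ) + ε) / N : ℝ) : ℂ) * τ) *
      eC (((ε * ((n : ℝ) + 2 * ε) / N : ℝ) : ℂ))) else 0) +
    (if n = 0 ∧ m < 0 then -(eC (-((ε * ((m : ℝ) + ε) / N : ℝ) : ℂ) * τ) *
      eC (((ε * ((m : ℝ) + 2 * ε) / N : ℝ) : ℂ))) else 0) := by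
  have hN' : (0:ℝ) < N := by exact_mod_cast hN
  have ht2 : 0 < 1 + t ^ 2 := by positivity
  rw [lt_div_iff₀ ht2] at h1 h2
  have hε1 : ε < 1 := by nlinarith
  rw [phiPlus_iota N hN τ t ht]
  have hq : 0 < Real.sqrt (2 * N) := by positivity
  by_cases hm : m = 0
  · subst hm
    by_cases hn : n < 0
    · have hn' : (n:ℝ) ≤ -1 := by exact_mod_cast (by omega : n ≤ -1)
      have hs : kS N t ((0:ℤ) + ε) (n + ε) < 0 := by
        rw [kS_eq]
        apply div_neg_of_neg_of_pos _ hq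
        have : t * (t⁻¹ * (((0:ℤ):ℝ) + ε) + t * (n + ε)) < 0 := by
          have : t * (t⁻¹ * (((0:ℤ):ℝ) + ε) + t * (n + ε)) = ε * (1 + t^2) + t^2 * n := by
            push_cast; field_simp; ring
          rw [this]
          nlinarith [sq_nonneg t]
        by_contra hcon
        push Not at hcon
        exact absurd (mul_nonneg ht.le hcon) (not_le.2 this)
      have hlt : (((0:ℤ):ℝ) + ε) * (n + ε) < 0 := by
        push_cast; rw [zero_add]; apply mul_neg_of_pos_of_neg hε; linarith
      rw [Real.sign_of_neg hs]
      have hn0 : n ≠ 0 := hn.ne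
      simp [hn, hn0, hε]
      intro hcon; linarith
    · have hn' : (0:ℝ) ≤ n := by exact_mod_cast (by omega : 0 ≤ n)
      have hlt : ¬ (((0:ℤ):ℝ) + ε) * (n + ε) < 0 := by
        push_cast; rw [zero_add, not_lt]; positivity
      rw [if_neg hlt]
      simp [hn]
  · by_cases hn : n = 0
    · subst hn
      by_cases hm1 : m < 0
      · have hm' : (m:ℝ) ≤ -1 := by exact_mod_cast (by omega : m ≤ -1)
        have hs : kS N t (m + ε) ((0:ℤ) + ε) < 0 := by
          rw [kS_eq]
          apply div_neg_of_neg_of_pos _ hq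
          have : t * (t⁻¹ * (m + ε) + t * (((0:ℤ):ℝ) + ε)) < 0 := by
            have : t * (t⁻¹ * (m + ε) + t * (((0:ℤ):ℝ) + ε)) = ε * (1 + t^2) + m := by
              push_cast; field_simp; ring
            rw [this]
            linarith
          by_contra hcon
          push Not at hcon
          exact absurd (mul_nonneg ht.le hcon) (not_le.2 this)
        rw [Real.sign_of_neg hs]
        have hlt : (m + ε) * ε < 0 := by
          apply mul_neg_of_neg_of_pos _ hε; linarith
        simp [hm1, hm, hlt, mul_comm ε]
      · have hm' : (0:ℝ) ≤ m := by exact_mod_cast (by omega : 0 ≤ m)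
        have hlt : ¬ (m + ε) * (((0:ℤ):ℝ) + ε) < 0 := by
          push_cast; rw [zero_add, not_lt]; positivity
        rw [if_neg hlt]
        simp [hm1, hm]
    · simp [hm, hn]

lemma thetaTerm_eq (N : ℕ) (hN : 0 < N) (h : ℤ × ℤ) (τ : ℂ) (t : ℝ) (ht : 0 < t) (ε : ℝ) (hε : 0 < ε)
    (h1 : ε < 1 / (1 + t ^ 2)) (h2 : ε < t ^ 2 / (1 + t ^ 2)) (p : ℤ × ℤ) :
    thetaTerm N h τ t ε p = Apart N τ t (h.1 + N * p.1) (h.2 + N * p.2) ε +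
      (Gax N τ ε h.1 h.2 p + Gax N τ ε h.2 h.1 p.swap) := by
  have := axis_val N hN τ t ht ε hε h1 h2 (h.1 + N * p.1) (h.2 + N * p.2)
  unfold Gax
  simp only [Prod.fst_swap, Prod.snd_swap]
  rw [← this]
  unfold thetaTerm Apart phiTilde
  split_ifs with hc
  · ring
  · ring

lemma Gax_pack (N : ℕ) (hN : 0 < N) (τ : ℂ) (hτ : 0 < τ.im) (ε : ℝ) (hε : 0 < ε) (a b : ℤ) :
    HasSum (Gax N τ ε a b)
      (if (N : ℤ) ∣ a then Gsum N τ (frac01 (-((b : ℝ) / N))) ε else 0) := by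
  split_ifs with ha
  · exact Gax_hasSum N hN τ hτ ε hε a b ha
  · rw [Gax_zero N τ ε a b ha]; exact hasSum_zero

lemma Gax_pack_swap (N : ℕ) (hN : 0 < N) (τ : ℂ) (hτ : 0 < τ.im) (ε : ℝ) (hε : 0 < ε) (a b : ℤ) :
    HasSum (fun p : ℤ × ℤ => Gax N τ ε a b p.swap)
      (if (N : ℤ) ∣ a then Gsum N τ (frac01 (-((b : ℝ) / N))) ε else 0) := by
  have h1 := Gax_pack N hN τ hτ ε hε a b
  have h2 := (Equiv.prodComm ℤ ℤ).injective.hasSum_iff (f := Gax N τ ε a b)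
    (a := if (N : ℤ) ∣ a then Gsum N τ (frac01 (-((b : ℝ) / N))) ε else 0)
    (by intro x hx; exact absurd ((Equiv.prodComm ℤ ℤ).surjective x) hx)
  exact h2.2 h1

lemma Gpack_tendsto (N : ℕ) (τ : ℂ) (hτ : 0 < τ.im) (a b : ℤ) :
    Tendsto (fun ε : ℝ => (if (N : ℤ) ∣ a then Gsum N τ (frac01 (-((b : ℝ) / N))) ε else 0) -
        (if (N : ℤ) ∣ a then 1 else 0) / (2 * Real.pi * Complex.I * (τ - 1) * ε))
      (nhdsWithin 0 (Set.Ioi 0))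
      (nhds (if (N : ℤ) ∣ a then ((frac01 (-((b : ℝ) / N)) : ℝ) : ℂ) - 1 / 2 else 0)) := by
  split_ifs with ha
  · exact Gsum_tendsto N τ hτ _
  · simp

lemma const_eq (N : ℕ) (hN : 0 < N) (h : ℤ × ℤ) :
    (if (N : ℤ) ∣ h.1 then ((frac01 (-((h.2 : ℝ) / N)) : ℝ) : ℂ) - 1 / 2 else 0) +
    (if (N : ℤ) ∣ h.2 then ((frac01 (-((h.1 : ℝ) / N)) : ℝ) : ℂ) - 1 / 2 else 0) -
    (if (N : ℤ) ∣ h.1 ∧ (N : ℤ) ∣ h.2 then 1 else 0) = (cH0 N h : ℂ) := by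
  unfold cH0
  by_cases h1 : (N : ℤ) ∣ h.1 <;> by_cases h2 : (N : ℤ) ∣ h.2
  · rw [frac01_of_dvd N hN _ h1, frac01_of_dvd N hN _ h2]
    simp only [h1, h2, if_true, and_self, not_true_eq_false, false_and, and_false, if_false]
    push_cast; norm_num
  · rw [frac01_neg N hN _ h2]
    simp only [h1, h2, if_true, and_self, not_true_eq_false, false_and, and_false, if_false,
      not_false_eq_true]
    push_cast; ring
  · rw [frac01_neg N hN _ h1]
    simp only [h1, h2, if_true, and_self, false_and, if_false,
      not_false_eq_true]
    push_cast; ring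
  · simp [h1, h2]

lemma delta_tsum (N : ℕ) (hN : 0 < N) (h : ℤ × ℤ) :
    HasSum (fun p : ℤ × ℤ => if h.1 + N * p.1 = 0 ∧ h.2 + N * p.2 = 0 then (1:ℂ) else 0)
      (if (N : ℤ) ∣ h.1 ∧ (N : ℤ) ∣ h.2 then 1 else 0) := by
  split_ifs with hd
  · obtain ⟨⟨a, ha⟩, ⟨b, hb⟩⟩ := hd
    have hN0 : (N:ℤ) ≠ 0 := by exact_mod_cast hN.ne'
    have := hasSum_ite_eq ((-a, -b) : ℤ × ℤ) (1:ℂ)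
    convert this using 3 with p
    rw [ha, hb, ← mul_add, ← mul_add]
    simp only [mul_eq_zero, hN0, false_or, Prod.ext_iff]
    exact ⟨fun h => ⟨by omega, by omega⟩, fun h => ⟨by omega, by omega⟩⟩
  · convert hasSum_zero using 2 with p
    rw [if_neg]
    rintro ⟨e1, e2⟩
    exact hd ⟨⟨-p.1, by linarith⟩, ⟨-p.2, by linarith⟩⟩

/-- the shifted series `Θ̃_h(τ,t;ε)` converges absolutely for
`0 < ε < min(1/(1+t²), t²/(1+t²))`, the unshifted series converges absolutely, and
`lim_{ε→0⁺} [Θ̃_h(τ,t;ε) - c_{-1}(h)/(2πi(τ-1)ε)] = c_h(0) + Θ̃_h(τ,t;0)`. -/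
theorem stmt16 (N : ℕ) (hN : 0 < N) (h : ℤ × ℤ) (τ : ℂ) (hτ : 0 < τ.im)
    (t : ℝ) (ht : 0 < t) :
    (∀ ε : ℝ, 0 < ε → ε < min (1 / (1 + t ^ 2)) (t ^ 2 / (1 + t ^ 2)) →
      Summable (thetaTerm N h τ t ε)) ∧
    Summable (thetaTerm N h τ t 0) ∧
    Tendsto (fun ε : ℝ =>
        (∑' p : ℤ × ℤ, thetaTerm N h τ t ε p) -
          (cMinus1 N h : ℂ) / (2 * Real.pi * Complex.I * (τ - 1) * ε))
      (nhdsWithin 0 (Set.Ioi 0))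
      (nhds ((cH0 N h : ℂ) + ∑' p : ℤ × ℤ, thetaTerm N h τ t 0 p)) := by
  obtain ⟨c, hc, hb⟩ := Apart_bound N hN τ hτ t ht
  have hB := summable_bound N hN h c hc
  set A : ℝ → ℤ × ℤ → ℂ := fun ε p => Apart N τ t (h.1 + N * p.1) (h.2 + N * p.2) ε with hA
  have hAs : ∀ ε : ℝ, 0 ≤ ε → ε ≤ 1 / 2 → Summable (A ε) := fun ε h0 h1 =>
    Summable.of_norm_bounded hB (fun p => hb _ _ ε h0 h1)
  have ht2 : 0 < 1 + t ^ 2 := by positivity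
  have hhalf : ∀ ε : ℝ, ε < min (1 / (1 + t ^ 2)) (t ^ 2 / (1 + t ^ 2)) → ε ≤ 1 / 2 := by
    intro ε hε
    obtain ⟨h1, h2⟩ := lt_min_iff.1 hε
    rw [lt_div_iff₀ ht2] at h1 h2
    by_contra hcon
    push Not at hcon
    nlinarith [sq_nonneg t]
  set g1 : ℝ → ℂ := fun ε => if (N : ℤ) ∣ h.1 then Gsum N τ (frac01 (-((h.2 : ℝ) / N))) ε else 0
  set g2 : ℝ → ℂ := fun ε => if (N : ℤ) ∣ h.2 then Gsum N τ (frac01 (-((h.1 : ℝ) / N))) ε else 0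
  have hsum : ∀ ε : ℝ, 0 < ε → ε < min (1 / (1 + t ^ 2)) (t ^ 2 / (1 + t ^ 2)) →
      HasSum (thetaTerm N h τ t ε) ((∑' p, A ε p) + (g1 ε + g2 ε)) := by
    intro ε h0 hε
    obtain ⟨h1, h2⟩ := lt_min_iff.1 hε
    have e : thetaTerm N h τ t ε = fun p => A ε p +
      (Gax N τ ε h.1 h.2 p + Gax N τ ε h.2 h.1 p.swap) :=
      funext (thetaTerm_eq N hN h τ t ht ε h0 h1 h2)
    rw [e]
    refine (hAs ε h0.le (hhalf ε hε)).hasSum.add ((Gax_pack N hN τ hτ ε h0 h.1 h.2).add ?_)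
    exact Gax_pack_swap N hN τ hτ ε h0 h.2 h.1
  have hz : thetaTerm N h τ t 0 = A 0 := funext (thetaTerm_zero N hN h τ t ht)
  have hA0 := hAs 0 le_rfl (by norm_num)
  refine ⟨fun ε h0 hε => (hsum ε h0 hε).summable, by rw [hz]; exact hA0, ?_⟩
  have hmin : 0 < min (1 / (1 + t ^ 2)) (t ^ 2 / (1 + t ^ 2)) := by positivity
  have hev : ∀ᶠ ε : ℝ in nhdsWithin 0 (Set.Ioi 0),
      0 < ε ∧ ε < min (1 / (1 + t ^ 2)) (t ^ 2 / (1 + t ^ 2)) := Ioo_mem_nhdsGT hmin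
  have hd := delta_tsum N hN h
  have hAlim : Tendsto (fun ε => ∑' p, A ε p) (nhdsWithin 0 (Set.Ioi 0))
      (nhds (∑' p : ℤ × ℤ, (A 0 p -
        if h.1 + N * p.1 = 0 ∧ h.2 + N * p.2 = 0 then (1:ℂ) else 0))) := by
    refine tendsto_tsum_of_dominated_convergence hB
      (fun p => Apart_tendsto N hN τ t ht (h.1 + N * p.1) (h.2 + N * p.2)) ?_
    filter_upwards [hev] with ε hε p
    exact hb _ _ ε hε.1.le (hhalf ε hε.2)
  have hts := (HasSum.sub hA0.hasSum hd).tsum_eq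
  rw [hts] at hAlim
  have hlim := hAlim.add ((Gpack_tendsto N τ hτ h.1 h.2).add (Gpack_tendsto N τ hτ h.2 h.1))
  rw [hz, ← const_eq N hN h]
  refine Tendsto.congr' ?_ (hlim.trans (le_of_eq (congrArg nhds ?_)))
  · filter_upwards [hev] with ε hε
    rw [(hsum ε hε.1 hε.2).tsum_eq]
    simp only [cMinus1, g1, g2]
    push_cast
    ring
  · ring

end
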